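/- Let p = 2 or p = 3, let k ≥ 1, and let R = Mat_2(Z_{p^k}). Then J(R) = 1 + Jac(R) has a complement in the unit group G(R). -/

import Mathlib

/-!
By `complement_of_section`, a complement is the image of a multiplicative section of the reduction
map `GL₂(ℤ/p^k) → GL₂(𝔽_p)`, whose kernel is `1 + Jac` because the Jacobson radical of
`Mat₂(ℤ/p^k)` consists of the matrices with all entries divisible by `p`.

* For `p = 2`, `GL₂(𝔽₂)` permutes the three nonzero vectors of `𝔽₂²`. These lift to the integer
  vectors `e₁`, `e₂`, `-(e₁ + e₂)`, which sum to zero, so the permutations lift to `GL₂(ℤ)`; this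
  is `lift₂`.
* For `p = 3`, choose `w` with `w² = -2` and `w ≡ 1 (mod 3)` in `ℤ/3^k`. The matrices
  `i = [0, -1; 1, 0]` and `j = [1, w; w, -1]` satisfy the quaternion relations. Writing a matrix over
  `𝔽₃` as a quaternion and lifting its coordinates to `{-1, 0, 1}` gives an integral quaternion `q`
  of norm `1`, `2` or `4` when the matrix is invertible. The section sends the matrix to `c q`, where
  `c` is `1`, `1 / w`, `-1 / 2` in the three cases, so that `c ≡ 1 (mod 3)`. The image consists of
  the 24 Hurwitz units together with the 24 elements `(±u ± v) / w` for distinct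
  `u, v ∈ {1, i, j, k}`. Multiplicativity of the coordinate lift up to an explicit scalar is the
  finite check `coord_mul`.
-/

open Pointwise

/-- The subgroup `1 + I` of the unit group `Rˣ`, for an ideal `I` of `R`. -/
def onePlus (R : Type*) [Ring R] (I : Ideal R) : Subgroup Rˣ where
  carrier := {u : Rˣ | (u : R) - 1 ∈ I}
  one_mem' := by simp
  mul_mem' := by
    intro a b ha hb
    have h : ((a * b : Rˣ) : R) - 1 = (a : R) * ((b : R) - 1) + ((a : R) - 1) := by
      push_cast; rw [mul_sub, mul_one]; abel
    simpa only [Set.mem_setOf_eq, h] using I.add_mem (I.mul_mem_left _ hb) ha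
  inv_mem' := by
    intro a ha
    have h : ((a⁻¹ : Rˣ) : R) - 1 = -((a⁻¹ : Rˣ) * ((a : R) - 1)) := by
      rw [mul_sub, mul_one, Units.inv_mul, neg_sub]
    simpa only [Set.mem_setOf_eq, h] using I.neg_mem (I.mul_mem_left _ ha)

/-- `H` is a complement of `K`: trivial intersection and `H * K` is everything. -/
def IsComplementOf {G : Type*} [Group G] (H K : Subgroup G) : Prop :=
  H ⊓ K = ⊥ ∧ (H : Set G) * (K : Set G) = Set.univ

/-! ### Complements from sections of the reduction map -/

/-- The kernel of `ℤ/p^k → ℤ/p` is maximal and nil, so it is the Jacobson radical of `ℤ/p^k`. -/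
theorem kernel_iff {p k : ℕ} [Fact p.Prime] (hk : 1 ≤ k) (x : ZMod (p ^ k)) :
    x ∈ (Ideal.jacobson ⊥ : Ideal (ZMod (p ^ k))) ↔
      ZMod.castHom (dvd_pow_self p (by omega : k ≠ 0)) (ZMod p) x = 0 := by
  set π := ZMod.castHom (dvd_pow_self p (by omega : k ≠ 0)) (ZMod p)
  constructor
  · intro hx
    have hm : (RingHom.ker π).IsMaximal :=
      RingHom.ker_isMaximal_of_surjective π (ZMod.castHom_surjective _)
    exact (Ideal.mem_sInf.mp hx) ⟨bot_le, hm⟩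
  · intro hx
    apply Ideal.radical_le_jacobson
    refine ⟨k, ?_⟩
    have : NeZero (p ^ k) := ⟨pow_ne_zero _ (Fact.out : p.Prime).ne_zero⟩
    obtain ⟨n, rfl⟩ := ZMod.natCast_zmod_surjective x
    rw [map_natCast, ZMod.natCast_eq_zero_iff] at hx
    rw [Ideal.mem_bot, ← Nat.cast_pow, ZMod.natCast_eq_zero_iff]
    exact pow_dvd_pow_of_dvd hx k

/-- The left-ideal form of the description of the Jacobson radical of a matrix ring. -/
theorem matrix_jacobson_bot' {R n : Type*} [Ring R] [Fintype n] [DecidableEq n] :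
    (Ideal.jacobson (⊥ : Ideal R)).matrix n = Ideal.jacobson (⊥ : Ideal (Matrix n n R)) := by
  have h := congrArg TwoSidedIdeal.asIdeal (TwoSidedIdeal.matrix_jacobson_bot (R := R) (n := n))
  rwa [TwoSidedIdeal.asIdeal_matrix, TwoSidedIdeal.asIdeal_jacobson,
    TwoSidedIdeal.asIdeal_jacobson, TwoSidedIdeal.bot_asIdeal, TwoSidedIdeal.bot_asIdeal] at h

/-- A multiplicative section of the reduction map gives a complement, namely its image. -/
theorem complement_of_section {p k : ℕ} [Fact p.Prime] (hk : 1 ≤ k)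
    (f : (Matrix (Fin 2) (Fin 2) (ZMod p))ˣ →* Matrix (Fin 2) (Fin 2) (ZMod (p ^ k)))
    (hf : ∀ g, (f g).map (ZMod.castHom (dvd_pow_self p (by omega : k ≠ 0)) (ZMod p)) = g) :
    ∃ H : Subgroup (Matrix (Fin 2) (Fin 2) (ZMod (p ^ k)))ˣ,
        IsComplementOf H (onePlus (Matrix (Fin 2) (Fin 2) (ZMod (p ^ k))) (Ideal.jacobson ⊥)) := by
  set π := ZMod.castHom (dvd_pow_self p (by omega : k ≠ 0)) (ZMod p) with hπ
  let ρ := Units.map (π.mapMatrix (m := Fin 2)).toMonoidHom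
  let σ := f.toHomUnits
  have hσ : ∀ g, ρ (σ g) = g := fun g => Units.ext (hf g)
  have hker : ∀ u, u ∈ onePlus (Matrix (Fin 2) (Fin 2) (ZMod (p ^ k))) (Ideal.jacobson ⊥) ↔
      ρ u = 1 := by
    intro u
    change ((u : Matrix (Fin 2) (Fin 2) (ZMod (p ^ k))) - 1) ∈ Ideal.jacobson ⊥ ↔ _
    rw [← matrix_jacobson_bot', Ideal.mem_matrix, Units.ext_iff]
    have : ((ρ u : Matrix (Fin 2) (Fin 2) (ZMod p)) = (1 : (Matrix (Fin 2) (Fin 2) (ZMod p))ˣ)) ↔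
        π.mapMatrix ((u : Matrix (Fin 2) (Fin 2) (ZMod (p ^ k))) - 1) = 0 := by
      rw [map_sub, map_one, sub_eq_zero]; rfl
    rw [this, ← Matrix.ext_iff]
    exact forall₂_congr fun i j => kernel_iff hk _
  refine ⟨σ.range, ?_, ?_⟩
  · rw [eq_bot_iff]
    rintro _ ⟨⟨g, rfl⟩, h⟩
    have := (hker _).mp h
    rw [hσ] at this
    simp [this]
  · refine Set.eq_univ_of_forall fun u => ?_
    refine ⟨σ (ρ u), ⟨_, rfl⟩, (σ (ρ u))⁻¹ * u, (hker _).mpr ?_, by simp⟩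
    rw [map_mul, map_inv, hσ, inv_mul_cancel]

/-! ### The case `p = 2` -/

/-- The integral lift of a matrix over `𝔽₂`: every column equal to `(1, 1)` is replaced by
`(-1, -1)`, every other column keeps its `0/1` entries. -/
def lift₂ (A : Matrix (Fin 2) (Fin 2) (ZMod 2)) : Matrix (Fin 2) (Fin 2) ℤ :=
  let x := ((A 0 0).val : ℤ); let y := ((A 0 1).val : ℤ)
  let z := ((A 1 0).val : ℤ); let t := ((A 1 1).val : ℤ)
  !![x - 2 * x * z, y - 2 * y * t; z - 2 * x * z, t - 2 * y * t]

theorem lift₂_mul : ∀ A B : Matrix (Fin 2) (Fin 2) (ZMod 2), A.det ≠ 0 → B.det ≠ 0 →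
    lift₂ (A * B) = lift₂ A * lift₂ B := by
  decide +kernel

theorem lift₂_red : ∀ A : Matrix (Fin 2) (Fin 2) (ZMod 2), 
    (lift₂ A).map (Int.cast : ℤ → ZMod 2) = A := by
  decide +kernel

theorem lift₂_one : lift₂ 1 = 1 := by
  decide +kernel

/-! ### The case `p = 3` -/

/-- Matrices of size two over `𝔽₃`. -/
abbrev M₃ := Matrix (Fin 2) (Fin 2) (ZMod 3)

/-- The coordinates of a matrix over `𝔽₃` in the quaternion basis `1`, `i = [0, -1; 1, 0]`,
`j = [1, 1; 1, -1]`, `k = i j`, lifted to `{-1, 0, 1}`. -/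
def coord (A : M₃) : ℤ × ℤ × ℤ × ℤ :=
  ((-(A 0 0 + A 1 1)).valMinAbs, (A 0 1 - A 1 0).valMinAbs,
   (A 0 0 + A 0 1 + A 1 0 - A 1 1).valMinAbs, (A 0 1 + A 1 0 + A 1 1 - A 0 0).valMinAbs)

/-- The quaternion norm of a coordinate vector. -/
def nrm (q : ℤ × ℤ × ℤ × ℤ) : ℤ := q.1 ^ 2 + q.2.1 ^ 2 + q.2.2.1 ^ 2 + q.2.2.2 ^ 2

/-- Quaternion multiplication in coordinates with respect to `1, i, j, k`. -/
def qmul (q r : ℤ × ℤ × ℤ × ℤ) : ℤ × ℤ × ℤ × ℤ :=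
  (q.1 * r.1 - q.2.1 * r.2.1 - q.2.2.1 * r.2.2.1 - q.2.2.2 * r.2.2.2,
   q.1 * r.2.1 + q.2.1 * r.1 + q.2.2.1 * r.2.2.2 - q.2.2.2 * r.2.2.1,
   q.1 * r.2.2.1 - q.2.1 * r.2.2.2 + q.2.2.1 * r.1 + q.2.2.2 * r.2.1,
   q.1 * r.2.2.2 + q.2.1 * r.2.2.1 - q.2.2.1 * r.2.1 + q.2.2.2 * r.1)

/-- The lifted norm is the number of nonzero coordinates, and it is nonzero modulo `3`. -/
theorem nrm_coord : ∀ A : M₃, A.det ≠ 0 → nrm (coord A) = 1 ∨ nrm (coord A) = 2 ∨ nrm (coord A) = 4 := by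
  decide +kernel

/-- The coordinate lift is multiplicative up to an integer `l ≡ 1 (mod 3)`, whose square is
determined by the norms. -/
theorem coord_mul : ∀ A B : M₃, A.det ≠ 0 → B.det ≠ 0 →
    ∃ l ∈ [(1 : ℤ), -2, 4], qmul (coord A) (coord B) = l • coord (A * B) ∧
      nrm (coord A) * nrm (coord B) = l ^ 2 * nrm (coord (A * B)) := by
  decide +kernel

/-- The integral quaternion `q` as a matrix, with `i = [0, -1; 1, 0]` and `j = [1, w; w, -1]`.
These satisfy the quaternion relations when `w ^ 2 = -2`. -/
def emb {R : Type*} [CommRing R] (w : R) (q : ℤ × ℤ × ℤ × ℤ) : Matrix (Fin 2) (Fin 2) R :=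
  !![(q.1 : R) + q.2.2.1 - w * q.2.2.2, -q.2.1 + w * q.2.2.1 + q.2.2.2;
     (q.2.1 : R) + w * q.2.2.1 + q.2.2.2, q.1 - q.2.2.1 + w * q.2.2.2]

theorem emb_mul {R : Type*} [CommRing R] (w : R) (hw : w * w = -2) (q r : ℤ × ℤ × ℤ × ℤ) :
    emb w (qmul q r) = emb w q * emb w r := by
  obtain ⟨a, b, c, d⟩ := q
  obtain ⟨a', b', c', d'⟩ := r
  ext i j
  fin_cases i <;> fin_cases j <;>
    simp [emb, qmul, Matrix.mul_apply, Fin.sum_univ_two]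
  · linear_combination (-(c * c' : R) - d * d') * hw
  · linear_combination (-(c * d' : R) + d * c') * hw
  · linear_combination ((c * d' : R) - d * c') * hw
  · linear_combination (-(c * c' : R) - d * d') * hw

theorem emb_smul {R : Type*} [CommRing R] (w : R) (l : ℤ) (q : ℤ × ℤ × ℤ × ℤ) :
    emb w (l • q) = (l : R) • emb w q := by
  ext i j
  fin_cases i <;> fin_cases j <;> simp [emb] <;> ring

/-- Modulo `3`, where `√-2 = 1`, the coordinates recover the matrix. -/
theorem emb_coord : ∀ A : M₃, emb (1 : ZMod 3) (coord A) = A := by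
  decide +kernel

/-- The scalar `c` attached to an integral quaternion of norm `n ∈ {1, 2, 4}`. Here `h` stands
for `1 / 2`, so that the values for `n = 1, 2, 4` are `1`, `1 / w`, `-1 / 2`. -/
def scal {R : Type*} [CommRing R] (w h : R) (n : ℤ) : R :=
  if n = 1 then 1 else if n = 2 then -(h * w) else -h

theorem scal_mul {R : Type*} [CommRing R] (w h : R) (hw : w * w = -2) (hh : 2 * h = 1)
    {n m r l : ℤ} (hn : n = 1 ∨ n = 2 ∨ n = 4) (hm : m = 1 ∨ m = 2 ∨ m = 4)
    (hr : r = 1 ∨ r = 2 ∨ r = 4) (hl : l ∈ [(1 : ℤ), -2, 4]) (e : n * m = l ^ 2 * r) :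
    scal w h n * scal w h m * l = scal w h r := by
  simp only [List.mem_cons, List.not_mem_nil, or_false] at hl
  rcases hn with rfl | rfl | rfl <;> rcases hm with rfl | rfl | rfl <;>
    rcases hl with rfl | rfl | rfl <;> rcases hr with rfl | rfl | rfl <;>
    first
    | (exfalso; revert e; norm_num; done)
    | (simp [scal]; done)
    | (simp [scal]; grind)

/-- The multiplicative map `GL₂(𝔽₃) → Mat₂(R)`, `A ↦ c q`, for `w ^ 2 = -2` and `h = 1 / 2` in `R`,
where `q` is the coordinate lift of `A` and `c` its scalar. -/
def section₃ {R : Type*} [CommRing R] (w h : R) (hw : w * w = -2) (hh : 2 * h = 1) :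
    (Matrix (Fin 2) (Fin 2) (ZMod 3))ˣ →* Matrix (Fin 2) (Fin 2) R where
  toFun g := scal w h (nrm (coord g)) • emb w (coord g)
  map_one' := by
    have h1 : coord (1 : M₃) = (1, 0, 0, 0) := by decide +kernel
    ext i j
    fin_cases i <;> fin_cases j <;> simp [h1, emb, nrm, scal]
  map_mul' a b := by
    have hdet (g : M₃ˣ) : (g : M₃).det ≠ 0 :=
      ((Matrix.isUnit_iff_isUnit_det _).mp g.isUnit).ne_zero
    obtain ⟨l, hl, h1, h2⟩ := coord_mul a b (hdet a) (hdet b)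
    have hs := scal_mul w h hw hh (nrm_coord a (hdet a)) (nrm_coord b (hdet b))
      (nrm_coord _ (hdet (a * b))) hl h2
    simp only [Units.val_mul] at hs ⊢
    rw [← hs, smul_mul_smul_comm, ← emb_mul w hw, h1, emb_smul, smul_smul]

/-- Hensel lifting of the root `1` of `x ^ 2 + 2` modulo `3`, done by hand. -/
theorem exists_root (k : ℕ) : ∃ r : ℤ, (3 : ℤ) ∣ r - 1 ∧ (3 : ℤ) ^ k ∣ r ^ 2 + 2 := by
  induction k with
  | zero => exact ⟨1, by simp, by simp⟩
  | succ k ih =>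
    rcases k with _ | k
    · exact ⟨1, by simp, by norm_num⟩
    obtain ⟨r, ⟨s, hs⟩, m, hm⟩ := ih
    -- Newton's correction: `2 r ≡ -1 (mod 3)`, so adding `3 ^ (k + 1) * m` kills the error.
    refine ⟨r + 3 ^ (k + 1) * m, ⟨s + 3 ^ k * m, by rw [pow_succ]; linear_combination hs⟩,
      m * (1 + 2 * s) + 3 ^ k * m ^ 2, ?_⟩
    have hr : r = 1 + 3 * s := by linear_combination hs
    linear_combination hm + 2 * 3 ^ (k + 1) * m * hr

/-- For `p = 2` or `p = 3` and any `k ≥ 1`, `J(Mat_2(ℤ/p^k))` has a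
complement in the unit group. -/
theorem complement_matrix_two (p k : ℕ) (hp : p = 2 ∨ p = 3) (hk : 1 ≤ k) :
    ∃ H : Subgroup (Matrix (Fin 2) (Fin 2) (ZMod (p ^ k)))ˣ,
        IsComplementOf H (onePlus (Matrix (Fin 2) (Fin 2) (ZMod (p ^ k))) (Ideal.jacobson ⊥)) := by
  rcases hp with rfl | rfl
  · have : Fact (Nat.Prime 2) := ⟨Nat.prime_two⟩
    have hdet (g : (Matrix (Fin 2) (Fin 2) (ZMod 2))ˣ) :
        (g : Matrix (Fin 2) (Fin 2) (ZMod 2)).det ≠ 0 :=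
      ((Matrix.isUnit_iff_isUnit_det _).mp g.isUnit).ne_zero
    refine complement_of_section hk
      { toFun := fun g => (Int.castRingHom (ZMod (2 ^ k))).mapMatrix (lift₂ g)
        map_one' := ?_
        map_mul' := fun a b => ?_ } fun g => ?_
    · rw [Units.val_one, lift₂_one, map_one]
    · rw [Units.val_mul, lift₂_mul _ _ (hdet a) (hdet b), map_mul]
    · conv_rhs => rw [← lift₂_red g]
      ext i j
      simp
  · have : Fact (Nat.Prime 3) := ⟨Nat.prime_three⟩
    obtain ⟨r, hr1, hr2⟩ := exists_root k
    have hw : (r : ZMod (3 ^ k)) * r = -2 := by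
      have := (ZMod.intCast_zmod_eq_zero_iff_dvd (r ^ 2 + 2) (3 ^ k)).mpr (by exact_mod_cast hr2)
      push_cast at this
      linear_combination this
    have hu : IsUnit ((2 : ℕ) : ZMod (3 ^ k)) :=
      (ZMod.isUnit_iff_coprime 2 (3 ^ k)).mpr (Nat.Coprime.pow_right k (by norm_num))
    obtain ⟨h, hh⟩ := hu.exists_right_inv
    rw [Nat.cast_ofNat] at hh
    refine complement_of_section hk (section₃ (r : ZMod (3 ^ k)) h hw hh) fun g => ?_
    set π := ZMod.castHom (dvd_pow_self 3 (by omega : k ≠ 0)) (ZMod 3)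
    have hπr : π (r : ZMod (3 ^ k)) = 1 := by
      rw [map_intCast]
      have := (ZMod.intCast_zmod_eq_zero_iff_dvd (r - 1) 3).mpr hr1
      push_cast at this
      linear_combination this
    have hπh : π h = -1 := by
      have h1 : 2 * π h = 1 := by rw [← map_ofNat π 2, ← map_mul, hh, map_one]
      have h3 : (3 : ZMod 3) = 0 := by rfl
      linear_combination -h1 + π h * h3
    have hs (n : ℤ) : π (scal (r : ZMod (3 ^ k)) h n) = 1 := by
      unfold scal
      split_ifs <;> simp [hπr, hπh]
    conv_rhs => rw [← emb_coord g]
    ext i j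
    change π (scal (r : ZMod (3 ^ k)) h (nrm (coord g)) * emb (r : ZMod (3 ^ k)) (coord g) i j) = _
    rw [map_mul, hs, one_mul]
    fin_cases i <;> fin_cases j <;> simp [emb, hπr]
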